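/- arXiv:1811.07620 — 2 statements merged into one kernel-verified Lean document; each statement's English description precedes it below -/
import Mathlib

section
/- Let 1 < p < ∞, let I ⊂ (0,π) be an open interval, and let f : I → ℝ be a C² solution of the p-Legendre equation with f(θ)² + ḟ(θ)² > 0 for all θ ∈ I. Define u(x) = |x|·f(θ(x)) on the open cone C = {x ∈ ℝ³ : x ≠ 0, θ(x) ∈ I}. Then u is p-harmonic on C, i.e. div(|∇u(x)|^{p−2} ∇u(x)) = 0 for all x ∈ C. -/
open MeasureTheory Metric Set Real
open scoped RealInnerProductSpace

/-- The polar angle of a vector of `ℝ³`. -/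
noncomputable def polarAngle (x : EuclideanSpace ℝ (Fin 3)) : ℝ :=
  Real.arccos (x 2 / ‖x‖)

lemma cos_polarAngle (x : EuclideanSpace ℝ (Fin 3)) : cos (polarAngle x) = x 2 / ‖x‖ := by
  have h : |x 2 / ‖x‖| ≤ 1 := by
    rw [abs_div, abs_norm]
    exact div_le_one_of_le₀ (by simpa using PiLp.norm_apply_le x 2) (norm_nonneg _)
  exact Real.cos_arccos (abs_le.1 h).1 (abs_le.1 h).2

lemma hasFDerivAt_norm_of_ne_zero {x : EuclideanSpace ℝ (Fin 3)} (hx : x ≠ 0) :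
    HasFDerivAt (fun y : EuclideanSpace ℝ (Fin 3) => ‖y‖) (‖x‖⁻¹ • innerSL ℝ x) x := by
  have hr : ‖x‖ ≠ 0 := norm_ne_zero_iff.2 hx
  have h := ((hasStrictFDerivAt_norm_sq x).hasFDerivAt).sqrt (pow_ne_zero 2 hr)
  simp only [Real.sqrt_sq (norm_nonneg _)] at h
  refine h.congr_fderiv ?_
  ext v
  simp
  field_simp

lemma hasFDerivAt_polarAngle {x : EuclideanSpace ℝ (Fin 3)} (hx : x ≠ 0)
    (hθ : polarAngle x ∈ Ioo 0 π) :
    HasFDerivAt polarAngle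
      ((-(1 / sin (polarAngle x))) • (‖x‖⁻¹ • EuclideanSpace.proj (𝕜 := ℝ) 2 -
        (cos (polarAngle x) * ‖x‖⁻¹ ^ 2) • innerSL ℝ x)) x := by
  have hr : ‖x‖ ≠ 0 := norm_ne_zero_iff.2 hx
  have hs := sin_pos_of_mem_Ioo hθ
  have hc := cos_polarAngle x
  have h1 : x 2 / ‖x‖ ≠ -1 := by
    rw [← hc]; intro h
    nlinarith [sin_sq_add_cos_sq (polarAngle x)]
  have h2 : x 2 / ‖x‖ ≠ 1 := by
    rw [← hc]; intro h
    nlinarith [sin_sq_add_cos_sq (polarAngle x)]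
  have hq : HasFDerivAt (fun y : EuclideanSpace ℝ (Fin 3) => y 2 / ‖y‖)
      (‖x‖⁻¹ • EuclideanSpace.proj (𝕜 := ℝ) 2 -
        (cos (polarAngle x) * ‖x‖⁻¹ ^ 2) • innerSL ℝ x) x := by
    have hp : HasFDerivAt (fun y : EuclideanSpace ℝ (Fin 3) => y 2)
        (EuclideanSpace.proj (𝕜 := ℝ) (2 : Fin 3)) x :=
      (EuclideanSpace.proj (𝕜 := ℝ) (2 : Fin 3)).hasFDerivAt
    simp only [div_eq_mul_inv]
    refine (hp.mul ((hasDerivAt_inv hr).comp_hasFDerivAt x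
      (hasFDerivAt_norm_of_ne_zero hx))).congr_fderiv ?_
    ext v
    simp [hc]
    field_simp
    ring
  have h := (Real.hasDerivAt_arccos h1 h2).comp_hasFDerivAt x hq
  rw [← Real.sin_arccos] at h
  exact h

lemma eventually_polarAngle_mem {a b : ℝ} (hI : Ioo a b ⊆ Ioo 0 π)
    {x : EuclideanSpace ℝ (Fin 3)} (hx : x ≠ 0) (hθ : polarAngle x ∈ Ioo a b) :
    ∀ᶠ y in nhds x, y ≠ 0 ∧ polarAngle y ∈ Ioo a b :=
  (isOpen_ne.eventually_mem hx).and <|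
    (hasFDerivAt_polarAngle hx (hI hθ)).continuousAt.eventually_mem (isOpen_Ioo.mem_nhds hθ)

/-- The gradient of `|x| f(θ(x))`. -/
lemma hasGradientAt_norm_mul_polarAngle {f : ℝ → ℝ} {f' : ℝ} {x : EuclideanSpace ℝ (Fin 3)}
    (hx : x ≠ 0) (hθ : polarAngle x ∈ Ioo 0 π) (hf : HasDerivAt f f' (polarAngle x)) :
    HasGradientAt (fun y => ‖y‖ * f (polarAngle y))
      (((f (polarAngle x) + cos (polarAngle x) / sin (polarAngle x) * f') * ‖x‖⁻¹) • x +
        (-f' / sin (polarAngle x)) • EuclideanSpace.single 2 1) x := by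
  have hr : ‖x‖ ≠ 0 := norm_ne_zero_iff.2 hx
  have hs := (sin_pos_of_mem_Ioo hθ).ne'
  rw [hasGradientAt_iff_hasFDerivAt]
  refine ((hasFDerivAt_norm_of_ne_zero hx).mul
    (hf.comp_hasFDerivAt x (hasFDerivAt_polarAngle hx hθ))).congr_fderiv ?_
  ext v
  simp [EuclideanSpace.inner_single_left]
  field_simp
  ring

lemma norm_sq_polar_gradient {x : EuclideanSpace ℝ (Fin 3)} (hx : x ≠ 0)
    (hθ : polarAngle x ∈ Ioo 0 π) (m n : ℝ) :
    ‖((m + cos (polarAngle x) / sin (polarAngle x) * n) * ‖x‖⁻¹) • x +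
        (-n / sin (polarAngle x)) • EuclideanSpace.single (2 : Fin 3) (1 : ℝ)‖ ^ 2 =
      m ^ 2 + n ^ 2 := by
  have hr : ‖x‖ ≠ 0 := norm_ne_zero_iff.2 hx
  have hs := (sin_pos_of_mem_Ioo hθ).ne'
  have hx2 : x 2 = cos (polarAngle x) * ‖x‖ := by rw [cos_polarAngle]; field_simp
  rw [norm_add_sq_real]
  simp only [norm_smul, inner_smul_left, inner_smul_right, EuclideanSpace.inner_single_right,
    mul_pow, Real.norm_eq_abs, sq_abs, hx2, PiLp.norm_single]
  simp
  field_simp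
  have h := sin_sq_add_cos_sq (polarAngle x)
  linear_combination -n ^ 2 * h

/-- The divergence of a field `a(θ) x/|x| + b(θ) e₃`. -/
lemma divergence_polar_field {α β : ℝ → ℝ} {α' β' : ℝ} {x : EuclideanSpace ℝ (Fin 3)}
    (hx : x ≠ 0) (hθ : polarAngle x ∈ Ioo 0 π)
    (hα : HasDerivAt α α' (polarAngle x)) (hβ : HasDerivAt β β' (polarAngle x))
    {V : EuclideanSpace ℝ (Fin 3) → EuclideanSpace ℝ (Fin 3)}
    (hV : V =ᶠ[nhds x] fun y => (α (polarAngle y) * ‖y‖⁻¹) • y +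
      β (polarAngle y) • EuclideanSpace.single 2 1) :
    DifferentiableAt ℝ V x ∧
      ∑ i, fderiv ℝ V x (EuclideanSpace.single i 1) i =
        (2 * α (polarAngle x) - sin (polarAngle x) * β') * ‖x‖⁻¹ := by
  have hr : ‖x‖ ≠ 0 := norm_ne_zero_iff.2 hx
  have hs := (sin_pos_of_mem_Ioo hθ).ne'
  have hT := hasFDerivAt_polarAngle hx hθ
  have hinv := (hasDerivAt_inv hr).comp_hasFDerivAt x (hasFDerivAt_norm_of_ne_zero hx)
  have h := ((((hα.comp_hasFDerivAt x hT).mul hinv).smul (hasFDerivAt_id x)).add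
    ((hβ.comp_hasFDerivAt x hT).smul_const
      (EuclideanSpace.single (2 : Fin 3) (1 : ℝ)))).congr_of_eventuallyEq hV
  refine ⟨h.differentiableAt, ?_⟩
  have hx2 : x 2 = cos (polarAngle x) * ‖x‖ := by rw [cos_polarAngle]; field_simp
  have hn : ‖x‖ ^ 2 = x 0 ^ 2 + x 1 ^ 2 + x 2 ^ 2 := by
    rw [EuclideanSpace.norm_sq_eq]; simp [Fin.sum_univ_three]
  have hsc := sin_sq_add_cos_sq (polarAngle x)
  rw [h.fderiv]
  simp [Fin.sum_univ_three, EuclideanSpace.inner_single_right]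
  rw [hx2] at hn ⊢
  field_simp
  linear_combination (α (polarAngle x) * sin (polarAngle x) - α' * cos (polarAngle x)) * hn +
    ‖x‖ ^ 2 * β' * hsc

lemma p_legendre_flux_identity {p : ℝ} (hp : 1 < p) {f g : ℝ → ℝ} {θ m : ℝ}
    (hs : sin θ ≠ 0) (hG : 0 < f θ ^ 2 + g θ ^ 2)
    (hf : HasDerivAt f (g θ) θ) (hg : HasDerivAt g m θ)
    (hODE : m + (f θ + cos θ / sin θ * g θ) *
      ((f θ ^ 2 + g θ ^ 2) / (f θ ^ 2 + (p - 1) * g θ ^ 2)) + f θ = 0) :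
    ∃ β', HasDerivAt (fun t => (f t ^ 2 + g t ^ 2) ^ ((p - 2) / 2) * (-g t / sin t)) β' θ ∧
      2 * ((f θ ^ 2 + g θ ^ 2) ^ ((p - 2) / 2) * (f θ + cos θ / sin θ * g θ)) -
        sin θ * β' = 0 := by
  have hGd := ((hf.pow 2).add (hg.pow 2)).rpow_const (p := (p - 2) / 2) (Or.inl hG.ne')
  refine ⟨_, hGd.mul (hg.neg.div (hasDerivAt_sin θ) hs), ?_⟩
  have hden : f θ ^ 2 + g θ ^ 2 * (p - 1) ≠ 0 := by
    rcases eq_or_ne (g θ) 0 with h0 | h0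
    · simp only [h0] at hG ⊢
      nlinarith
    · have := mul_pos (sq_pos_of_ne_zero h0) (sub_pos.2 hp)
      nlinarith [sq_nonneg (f θ)]
  have hpow : (f θ ^ 2 + g θ ^ 2) ^ ((p - 2) / 2) =
      (f θ ^ 2 + g θ ^ 2) ^ ((p - 2) / 2 - 1) * (f θ ^ 2 + g θ ^ 2) := by
    rw [Real.rpow_sub_one hG.ne', div_mul_cancel₀ _ hG.ne']
  simp only [Pi.add_apply, Pi.pow_apply, Pi.neg_apply]
  rw [hpow]
  generalize (f θ ^ 2 + g θ ^ 2) ^ ((p - 2) / 2 - 1) = K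
  field_simp at hODE ⊢
  push_cast
  linear_combination 2 * K * hODE

/-- If `f` is a `C²` solution of the `p`-Legendre equation on an open
interval `I ⊆ (0,π)` with `f² + ḟ² > 0` on `I`, then `u(x) = |x| f(θ(x))` is
`p`-harmonic on the cone `C = {x ≠ 0 : θ(x) ∈ I}`, i.e. `div(|∇u|^{p-2} ∇u) = 0` on `C`.
Here `θ(x) = arccos(x₃/|x|)` and the divergence is the sum of the diagonal entries of
the derivative of the vector field. -/
theorem legendre_solution_gives_p_harmonic
    (p : ℝ) (hp : 1 < p)
    (a b : ℝ) (hI : Set.Ioo a b ⊆ Set.Ioo (0:ℝ) π)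
    (f : ℝ → ℝ)
    (hf : ∀ θ ∈ Set.Ioo a b, ContDiffAt ℝ 2 f θ)
    (hODE : ∀ θ ∈ Set.Ioo a b,
      deriv (deriv f) θ + (f θ + (Real.cos θ / Real.sin θ) * deriv f θ) *
        ((f θ ^ 2 + deriv f θ ^ 2) / (f θ ^ 2 + (p - 1) * deriv f θ ^ 2)) + f θ = 0)
    (hnz : ∀ θ ∈ Set.Ioo a b, 0 < f θ ^ 2 + deriv f θ ^ 2)
    (u : EuclideanSpace ℝ (Fin 3) → ℝ)
    (hu : ∀ x : EuclideanSpace ℝ (Fin 3), x ≠ 0 →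
      u x = ‖x‖ * f (Real.arccos (x 2 / ‖x‖)))
    (W : EuclideanSpace ℝ (Fin 3) → EuclideanSpace ℝ (Fin 3))
    (hW : ∀ x, W x = ‖gradient u x‖ ^ (p - 2) • gradient u x) :
    ∀ x : EuclideanSpace ℝ (Fin 3), x ≠ 0 → Real.arccos (x 2 / ‖x‖) ∈ Set.Ioo a b →
      DifferentiableAt ℝ W x ∧
      ∑ i, fderiv ℝ W x (EuclideanSpace.single i 1) i = 0 := by
  intro x hx hθ
  change polarAngle x ∈ Ioo a b at hθ
  have hd : ∀ θ ∈ Ioo a b, HasDerivAt f (deriv f θ) θ := fun θ h =>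
    ((hf θ h).differentiableAt (by norm_num)).hasDerivAt
  have hdd : HasDerivAt (deriv f) (deriv (deriv f) (polarAngle x)) (polarAngle x) :=
    (((hf _ hθ).derivWithin (m := 1) (by norm_num)).differentiableAt (by norm_num)).hasDerivAt
  have hs := (sin_pos_of_mem_Ioo (hI hθ)).ne'
  obtain ⟨β', hβ, hβ'⟩ := p_legendre_flux_identity hp hs (hnz _ hθ) (hd _ hθ) hdd (hODE _ hθ)
  have hα := ((((hd _ hθ).pow 2).add (hdd.pow 2)).rpow_const (p := (p - 2) / 2)
    (Or.inl (hnz _ hθ).ne')).mul ((hd _ hθ).add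
      (((hasDerivAt_cos _).div (hasDerivAt_sin _) hs).mul hdd))
  have hV : W =ᶠ[nhds x] fun y =>
      (((f (polarAngle y) ^ 2 + deriv f (polarAngle y) ^ 2) ^ ((p - 2) / 2) *
        (f (polarAngle y) + cos (polarAngle y) / sin (polarAngle y) *
          deriv f (polarAngle y))) * ‖y‖⁻¹) • y +
      ((f (polarAngle y) ^ 2 + deriv f (polarAngle y) ^ 2) ^ ((p - 2) / 2) *
        (-deriv f (polarAngle y) / sin (polarAngle y))) • EuclideanSpace.single 2 1 := by
    filter_upwards [eventually_polarAngle_mem hI hx hθ] with y ⟨hy, hyθ⟩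
    have hg : gradient u y = _ :=
      ((hasGradientAt_norm_mul_polarAngle hy (hI hyθ) (hd _ hyθ)).congr_of_eventuallyEq
        ((isOpen_ne.eventually_mem hy).mono fun z hz => hu z hz)).gradient
    have hn : ‖gradient u y‖ ^ (p - 2) =
        (f (polarAngle y) ^ 2 + deriv f (polarAngle y) ^ 2) ^ ((p - 2) / 2) := by
      rw [← norm_sq_polar_gradient hy (hI hyθ), ← hg, ← Real.rpow_natCast,
        ← Real.rpow_mul (norm_nonneg _)]
      congr 1
      push_cast
      ring
    rw [hW, hn, hg, smul_add, smul_smul, smul_smul, mul_assoc]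
  obtain ⟨h1, h2⟩ := divergence_polar_field hx (hI hθ) hα hβ hV
  refine ⟨h1, h2.trans ?_⟩
  rw [mul_eq_zero]
  exact Or.inl hβ'
end

section
/- Let C ⊂ ℝ³ \ {0} be an open cone (i.e. tx ∈ C whenever x ∈ C and t > 0), let p ∈ ℝ, and let u : C → ℝ be a C² function that is positively homogeneous of degree 1 (u(tx) = t·u(x) for all t > 0, x ∈ C) and satisfies ∇u(x) ≠ 0 on C. Then the vector field x ↦ |∇u(x)|^{p−2} ∇(1/|x|) = −|∇u(x)|^{p−2} · x/|x|³ is divergence-free on C, i.e. div( |∇u(x)|^{p−2} ∇(1/|x|) ) = 0 for all x ∈ C. -/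
open Real

/-- The gradient of a function which is positively homogeneous of degree 1 on an open set is
positively homogeneous of degree 0. -/
lemma gradient_smul_of_homogeneous {E : Type*} [NormedAddCommGroup E] [InnerProductSpace ℝ E]
    [CompleteSpace E] {C : Set E} (hC : IsOpen C) {u : E → ℝ} {t : ℝ} (ht : 0 < t)
    (hhom : ∀ x ∈ C, u (t • x) = t * u x) {x : E} (hx : x ∈ C) :
    gradient u (t • x) = gradient u x := by
  have hev : (fun y => u (t • y)) =ᶠ[nhds x] fun y => (t • u) y := by
    filter_upwards [hC.mem_nhds hx] with y hy using by simpa using hhom y hy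
  have h := hev.fderiv_eq (𝕜 := ℝ)
  rw [fderiv_comp_smul, fderiv_const_smul_field] at h
  simp only [gradient, smul_right_injective _ ht.ne' h]

/-- Euler's identity along a ray, for functions homogeneous of degree `-n`. -/
lemma fderiv_apply_self_of_homogeneous_neg {E : Type*} [NormedAddCommGroup E] [NormedSpace ℝ E]
    {g : E → ℝ} {x : E} (n : ℕ) (hg : DifferentiableAt ℝ g x)
    (hhom : ∀ t > (0 : ℝ), g (t • x) = g x / t ^ n) :
    fderiv ℝ g x x = -n * g x := by
  have hray : HasDerivAt (fun t : ℝ => t • x) x 1 := by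
    simpa using (hasDerivAt_id (1 : ℝ)).smul_const x
  have hg' : HasFDerivAt g (fderiv ℝ g x) ((1 : ℝ) • x) := by
    simpa using hg.hasFDerivAt
  have hpow : HasDerivAt (fun t : ℝ => g x / t ^ n) (-n * g x) 1 := by
    have h := (hasDerivAt_const (1 : ℝ) (g x)).fun_div (hasDerivAt_pow n 1) (by simp)
    exact h.congr_deriv (by simp [mul_comm])
  refine (hg'.comp_hasDerivAt (1 : ℝ) hray).unique (hpow.congr_of_eventuallyEq ?_)
  filter_upwards [lt_mem_nhds (zero_lt_one' ℝ)] with t ht using hhom t ht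

/-- The divergence of the radial field `y ↦ g y • y`. -/
lemma sum_fderiv_smul_self {ι : Type*} [Fintype ι] [DecidableEq ι]
    {g : EuclideanSpace ℝ ι → ℝ} {x : EuclideanSpace ℝ ι} (hg : DifferentiableAt ℝ g x) :
    ∑ i, fderiv ℝ (fun y => g y • y) x (EuclideanSpace.single i 1) i =
      fderiv ℝ g x x + Fintype.card ι * g x := by
  have hx : fderiv ℝ g x x = ∑ i, fderiv ℝ g x (EuclideanSpace.single i 1) * x i := by
    have h := congrArg (fderiv ℝ g x) ((EuclideanSpace.basisFun ι ℝ).sum_repr x)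
    simpa [mul_comm] using h.symm
  rw [fderiv_fun_smul hg differentiableAt_fun_id, hx]
  simp [Finset.sum_add_distrib, add_comm]

/-- Let `C ⊆ ℝ³ \ {0}` be an open cone, `p ∈ ℝ`, and `u : C → ℝ` a `C²`
function, positively homogeneous of degree 1, with `∇u ≠ 0` on `C`.  Then the vector
field `x ↦ |∇u(x)|^{p-2} ∇(1/|x|) = -(|∇u(x)|^{p-2}/|x|³) • x` is divergence-free on `C`.
The divergence is the sum of the diagonal entries of the derivative of the field. -/
theorem homogeneous_weight_times_fundamental_gradient_divergence_free
    (p : ℝ)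
    (C : Set (EuclideanSpace ℝ (Fin 3)))
    (hCopen : IsOpen C) (hC0 : (0 : EuclideanSpace ℝ (Fin 3)) ∉ C)
    (hCcone : ∀ x ∈ C, ∀ t > (0:ℝ), t • x ∈ C)
    (u : EuclideanSpace ℝ (Fin 3) → ℝ)
    (hu : ContDiffOn ℝ 2 u C)
    (hhom : ∀ x ∈ C, ∀ t > (0:ℝ), u (t • x) = t * u x)
    (hgrad : ∀ x ∈ C, gradient u x ≠ 0)
    (W : EuclideanSpace ℝ (Fin 3) → EuclideanSpace ℝ (Fin 3))
    (hW : ∀ x, W x = -(‖gradient u x‖ ^ (p - 2) / ‖x‖ ^ 3) • x) :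
    ∀ x ∈ C, DifferentiableAt ℝ W x ∧
      ∑ i, fderiv ℝ W x (EuclideanSpace.single i 1) i = 0 := by
  intro x hx
  obtain rfl : W = fun y => -(‖gradient u y‖ ^ (p - 2) / ‖y‖ ^ 3) • y := funext hW
  have hx0 : x ≠ 0 := fun h => hC0 (h ▸ hx)
  have hdgrad : DifferentiableAt ℝ (gradient u) x := by
    have hfd : DifferentiableAt ℝ (fderiv ℝ u) x :=
      ((hu.contDiffAt (hCopen.mem_nhds hx)).fderiv_right (m := 1) (by norm_num)).differentiableAt
        (by norm_num)
    exact (InnerProductSpace.toDual ℝ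
      (EuclideanSpace ℝ (Fin 3))).symm.toContinuousLinearEquiv.differentiableAt.comp x hfd
  have hg : DifferentiableAt ℝ (fun y => -(‖gradient u y‖ ^ (p - 2) / ‖y‖ ^ 3)) x :=
    (((hdgrad.norm ℝ (hgrad x hx)).rpow_const
      (Or.inl (norm_ne_zero_iff.2 (hgrad x hx)))).fun_mul
        (((differentiableAt_fun_id.norm ℝ hx0).fun_pow 3).fun_inv
          (pow_ne_zero 3 (norm_ne_zero_iff.2 hx0)))).fun_neg
  refine ⟨hg.fun_smul differentiableAt_fun_id, ?_⟩
  rw [sum_fderiv_smul_self hg, fderiv_apply_self_of_homogeneous_neg 3 hg]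
  · simp
  · intro t ht
    rw [gradient_smul_of_homogeneous hCopen ht (fun y hy => hhom y hy t ht) hx, norm_smul,
      Real.norm_of_nonneg ht.le, mul_pow, neg_div, div_div, mul_comm (t ^ 3)]
end
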